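/- arXiv:math/0508172 — 2 statements merged into one kernel-verified Lean document; each statement's English description precedes it below -/
import Mathlib

section
/- Let X be a Peano continuum without cut points which admits no essential map to the circle, and let 𝓐 be a nonempty collection of connected closed subsets of X, each containing at least two points, such that 𝓐 is null and fine. Then the union ∪𝓐 is a connected subset of X. -/
/-!
Fineness makes the complement of `S = ⋃₀ 𝓐` totally disconnected, so `S` is dense. If `S`
were disconnected it would be covered by two open sets meeting it, which density makes disjoint,
and the complement of their union is a closed set, missing `S`, that separates two points.
By Zorn's lemma it contains a minimal closed separator `K`. Since every map to the circle lifts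
to the line, Janiszewski's theorem holds: a union of two disjoint closed sets separates no pair of
points that neither of them separates. So `K` is connected, hence has at most one point, and its
complement is connected because `X` has no cut points.

For Janiszewski's theorem, let `K₁ ∪ K₂` separate `p` from `q` and let `U` be the component of `p`
in its complement. Two real functions, continuous off `K₁` and off `K₂`, agree on `U` and differ by
`2π` off `U`, so they define one map to the circle. If neither `Kᵢ` separated `p` from `q`,
comparing both functions with a lift of this map would show that their difference is the same at
`p` as at `q`.
-/

open Set Filter Topology Pointwise

/-- The set `E` separates the points `x` and `y`: both lie outside `E` and in
different connected components of the complement of `E`. -/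
def SepPts {X : Type*} [TopologicalSpace X] (E : Set X) (x y : X) : Prop :=
  x ∉ E ∧ y ∉ E ∧ connectedComponentIn Eᶜ x ≠ connectedComponentIn Eᶜ y

/-- The set `E` separates the set `Y ⊆ X \ E`: two points of `Y` lie in different
connected components of the complement of `E`. -/
def SepSet {X : Type*} [TopologicalSpace X] (E Y : Set X) : Prop :=
  Y ⊆ Eᶜ ∧ ∃ x ∈ Y, ∃ y ∈ Y, connectedComponentIn Eᶜ x ≠ connectedComponentIn Eᶜ y

/-- Two (closed) sets `A` and `B` cross: they intersect, or each separates the other. -/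
def Crosses {X : Type*} [TopologicalSpace X] (A B : Set X) : Prop :=
  (A ∩ B).Nonempty ∨ (SepSet A B ∧ SepSet B A)

/-- There is a (finite) crossing sequence in `𝓐` from `A` to `B`. -/
def CrossSeqFromTo {X : Type*} [TopologicalSpace X] (𝓐 : Set (Set X)) (A B : Set X) : Prop :=
  ∃ (n : ℕ) (c : ℕ → Set X), c 0 = A ∧ c n = B ∧ (∀ i ≤ n, c i ∈ 𝓐) ∧
    ∀ i < n, Crosses (c i) (c (i + 1))

/-- A collection `𝓐` is cross-connected: any two of its elements are joined by a
crossing sequence in `𝓐`. -/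
def CrossConnected {X : Type*} [TopologicalSpace X] (𝓐 : Set (Set X)) : Prop :=
  ∀ A ∈ 𝓐, ∀ B ∈ 𝓐, CrossSeqFromTo 𝓐 A B

/-- There is a crossing sequence `A, A_1, …, A_n, B` in `𝓐` (with `n ≥ 1`) whose
intermediate terms `A_1, …, A_n` are disjoint from `D`. -/
def CrossSeqAvoiding {X : Type*} [TopologicalSpace X] (𝓐 : Set (Set X)) (A B D : Set X) :
    Prop :=
  ∃ n : ℕ, 1 ≤ n ∧ ∃ c : ℕ → Set X, c 0 = A ∧ c (n + 1) = B ∧ (∀ i ≤ n + 1, c i ∈ 𝓐) ∧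
    (∀ i ≤ n, Crosses (c i) (c (i + 1))) ∧ ∀ i, 1 ≤ i → i ≤ n → c i ∩ D = ∅

/-- A collection of subsets of a metric space is null if for every `ε > 0` only finitely
many of its members have diameter greater than `ε`. -/
def NullFam {X : Type*} [PseudoMetricSpace X] (𝓐 : Set (Set X)) : Prop :=
  ∀ ε : ℝ, 0 < ε → {A ∈ 𝓐 | ε < Metric.diam A}.Finite

/-- A collection `𝓐` is fine if any two distinct points are separated by the union of
some finite subcollection of `𝓐`. -/
def FineFam {X : Type*} [PseudoMetricSpace X] (𝓐 : Set (Set X)) : Prop :=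
  ∀ x y : X, x ≠ y → ∃ 𝓑 ⊆ 𝓐, 𝓑.Finite ∧ SepPts (⋃₀ 𝓑) x y

/-- A sequence of maps `T i : X → X` acts as a convergence sequence on the subset `A`,
with repeller `n ∈ A` and attractor `p ∈ A`: for every compact `C ⊆ A \ {n}` and every
open neighborhood `U` of `p`, eventually `T i '' C ⊆ U`. -/
def ConvSeqOn {X : Type*} [TopologicalSpace X] (A : Set X) (T : ℕ → X → X) (n p : X) :
    Prop :=
  n ∈ A ∧ p ∈ A ∧ ∀ C : Set X, C ⊆ A → IsCompact C → n ∉ C →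
    ∀ U : Set X, IsOpen U → p ∈ U → ∀ᶠ i in atTop, T i '' C ⊆ U

/-- The stabilizer of a subset `A ⊆ X` in `G`. -/
def stab (G : Type*) {X : Type*} [Group G] [MulAction G X] (A : Set X) : Set G :=
  {g : G | g • A = A}

/-- The subset `S` of the group `G` acts as a convergence group on `A ⊆ X`: every
sequence of distinct elements of `S` has a subsequence acting as a convergence
sequence on `A`. -/
def ConvGroupOn {G X : Type*} [Group G] [MulAction G X] [TopologicalSpace X]
    (S : Set G) (A : Set X) : Prop :=
  ∀ g : ℕ → G, (∀ i, g i ∈ S) → Function.Injective g →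
    ∃ k : ℕ → ℕ, StrictMono k ∧ ∃ n p : X,
      ConvSeqOn A (fun i => (g (k i) • · : X → X)) n p

/-- `(G, 𝓐)` is a local convergence pairing on `X`. -/
structure IsLocalConvPairing (G : Type*) {X : Type*} [Group G] [MulAction G X]
    [MetricSpace X] (𝓐 : Set (Set X)) : Prop where
  closed : ∀ A ∈ 𝓐, IsClosed A
  invariant : ∀ g : G, ∀ A ∈ 𝓐, g • A ∈ 𝓐
  big : ∀ A ∈ 𝓐, 2 < A.encard
  null : NullFam 𝓐
  fine : FineFam 𝓐
  stabConv : ∀ A ∈ 𝓐, ConvGroupOn (stab G A) A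
  connect : ∀ A ∈ 𝓐, ∀ B ∈ 𝓐, (A ∩ B).encard ≤ 2 →
    (∀ c : X, A ∩ B = {c} → ∀ b ∈ B, b ≠ c → CrossSeqAvoiding 𝓐 A B {b, c}) ∧
    ((¬ ∃ c : X, A ∩ B = {c}) → CrossSeqAvoiding 𝓐 A B (A ∩ B))

section Lifting

lemma exists_lift_of_nullhomotopic {A E B : Type*} [TopologicalSpace A] [TopologicalSpace E]
    [TopologicalSpace B] {π : E → B} (cov : IsCoveringMap π) (hsurj : Function.Surjective π)
    {f : C(A, B)} (hf : f.Nullhomotopic) : ∃ θ : C(A, E), π ∘ θ = f := by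
  obtain ⟨b, hb⟩ := hf
  obtain ⟨H⟩ := hb.symm
  obtain ⟨e, rfl⟩ := hsurj b
  let L := cov.liftHomotopy H.toContinuousMap (.const A e) H.map_zero_left
  refine ⟨L.comp ((ContinuousMap.const A 1).prodMk (.id A)), funext fun a => ?_⟩
  exact (congrFun (cov.liftHomotopy_lifts _ _ H.map_zero_left) (1, a)).trans (H.map_one_left a)

variable {X : Type*} [TopologicalSpace X]

lemma sub_eq_sub_of_circleExp_eqOn {C : Set X} (hC : IsPreconnected C) {θ φ : X → ℝ}
    (hθ : ContinuousOn θ C) (hφ : ContinuousOn φ C)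
    (h : EqOn (fun x => Circle.exp (θ x)) (fun x => Circle.exp (φ x)) C)
    {p q : X} (hp : p ∈ C) (hq : q ∈ C) : θ p - φ p = θ q - φ q := by
  have hone : ∀ x ∈ C, Circle.exp (θ x - φ x) = 1 := fun x hx => by
    rw [Circle.exp_sub, div_eq_one]
    exact h hx
  exact Circle.isCoveringMap_exp.constOn_of_comp hC (g := fun x => θ x - φ x) (hθ.sub hφ)
    (fun x hx y hy => (hone x hx).trans (hone y hy).symm) hp hq

lemma sub_eq_sub_of_circleExp_eq (hcirc : ∀ f : C(X, Circle), f.Nullhomotopic)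
    {U₁ U₂ : Set X} (hU₁ : IsOpen U₁) (hU₂ : IsOpen U₂) (hcover : U₁ ∪ U₂ = univ) {φ₁ φ₂ : X → ℝ}
    (hφ₁ : ContinuousOn φ₁ U₁) (hφ₂ : ContinuousOn φ₂ U₂)
    (h : ∀ x, Circle.exp (φ₁ x) = Circle.exp (φ₂ x)) {p q : X}
    (hq₁ : q ∈ connectedComponentIn U₁ p) (hq₂ : q ∈ connectedComponentIn U₂ p) :
    φ₁ p - φ₂ p = φ₁ q - φ₂ q := by
  have hf₁ : ContinuousOn (fun x => Circle.exp (φ₁ x)) U₁ :=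
    Circle.exp.continuous.comp_continuousOn hφ₁
  have hf₂ : ContinuousOn (fun x => Circle.exp (φ₁ x)) U₂ :=
    (Circle.exp.continuous.comp_continuousOn hφ₂).congr fun x _ => h x
  have hf : Continuous fun x => Circle.exp (φ₁ x) := by
    rw [← continuousOn_univ, ← hcover]
    exact hf₁.union_of_isOpen hf₂ hU₁ hU₂
  obtain ⟨θ, hθ⟩ := exists_lift_of_nullhomotopic Circle.isCoveringMap_exp Circle.exp_surjective
    (hcirc ⟨_, hf⟩)
  have hlift : ∀ x, Circle.exp (θ x) = Circle.exp (φ₁ x) := congrFun hθ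
  have hdiff {U : Set X} {φ : X → ℝ} (hφ : ContinuousOn φ U)
      (hexp : ∀ x, Circle.exp (θ x) = Circle.exp (φ x)) (hq : q ∈ connectedComponentIn U p) :
      θ p - φ p = θ q - φ q :=
    sub_eq_sub_of_circleExp_eqOn isPreconnected_connectedComponentIn θ.continuous.continuousOn
      (hφ.mono (connectedComponentIn_subset U p)) (fun x _ => hexp x)
      (mem_connectedComponentIn (connectedComponentIn_nonempty_iff.1 ⟨q, hq⟩)) hq
  linarith [hdiff hφ₁ hlift hq₁, hdiff hφ₂ (fun x => (hlift x).trans (h x)) hq₂]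

lemma exists_continuousOn_eqOn_add_two_pi [NormalSpace X] {K₁ K₂ U : Set X} (hK₁ : IsClosed K₁)
    (hK₂ : IsClosed K₂) (hd : Disjoint K₁ K₂) (hU : frontier U ⊆ K₁ ∪ K₂) :
    ∃ φ₁ φ₂ : X → ℝ, ContinuousOn φ₁ K₁ᶜ ∧ ContinuousOn φ₂ K₂ᶜ ∧
      EqOn φ₂ φ₁ U ∧ EqOn φ₂ (fun x => φ₁ x + 2 * Real.pi) Uᶜ := by
  classical
  obtain ⟨g, hg₂, hg₁, -⟩ := exists_continuous_zero_one_of_isClosed hK₂ hK₁ hd.symm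
  let φ₁ : X → ℝ := U.piecewise (fun x => Real.pi * g x) (fun x => -(Real.pi * g x))
  let φ₂ : X → ℝ := U.piecewise (fun x => Real.pi * g x) (fun x => -(Real.pi * g x) + 2 * Real.pi)
  refine ⟨φ₁, φ₂, ContinuousOn.piecewise ?_ (by fun_prop) (by fun_prop),
    ContinuousOn.piecewise ?_ (by fun_prop) (by fun_prop), fun x hx => ?_, fun x hx => ?_⟩
  · rintro x ⟨hx₁, hxU⟩
    have hgx : g x = 0 := hg₂ ((hU hxU).resolve_left hx₁)
    simp [hgx]
  · rintro x ⟨hx₂, hxU⟩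
    have hgx : g x = 1 := hg₁ ((hU hxU).resolve_right hx₂)
    simp only [hgx]
    ring
  · simp only [φ₁, φ₂, piecewise_eq_of_mem _ _ _ hx]
  · simp only [φ₁, φ₂, piecewise_eq_of_notMem _ _ _ hx]

end Lifting

section Components

variable {X : Type*} [TopologicalSpace X] [LocallyConnectedSpace X]

lemma frontier_connectedComponentIn_subset_compl {W : Set X} (hW : IsOpen W) (p : X) :
    frontier (connectedComponentIn W p) ⊆ Wᶜ := by
  intro x hx hxW
  rw [hW.connectedComponentIn.frontier_eq] at hx
  obtain ⟨y, hyx, hyp⟩ := mem_closure_iff.1 hx.1 _ hW.connectedComponentIn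
    (mem_connectedComponentIn hxW)
  refine hx.2 ?_
  rw [connectedComponentIn_eq hyp, ← connectedComponentIn_eq hyx]
  exact mem_connectedComponentIn hxW

lemma connectedComponentIn_iUnion_of_directed {ι : Type*} {U : ι → Set X}
    (hU : ∀ i, IsOpen (U i)) (hdir : Directed (· ⊆ ·) U) (p : X) :
    connectedComponentIn (⋃ i, U i) p = ⋃ i, connectedComponentIn (U i) p := by
  refine Subset.antisymm (fun q hq => ?_)
    (iUnion_subset fun i => connectedComponentIn_mono p (subset_iUnion U i))
  have hp : p ∈ connectedComponentIn (⋃ i, U i) p :=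
    mem_connectedComponentIn (connectedComponentIn_nonempty_iff.1 ⟨q, hq⟩)
  refine mem_iUnion.2 (isPreconnected_connectedComponentIn.induction₂
    (fun x y => ∃ i, y ∈ connectedComponentIn (U i) x) (fun x hx => ?_) ?_ ?_ hp hq)
  · obtain ⟨i, hi⟩ := mem_iUnion.1 (connectedComponentIn_subset _ _ hx)
    filter_upwards [mem_nhdsWithin_of_mem_nhds (connectedComponentIn_mem_nhds ((hU i).mem_nhds hi))]
      with y hy using ⟨i, hy⟩
  · rintro x y z - - - ⟨i, hi⟩ ⟨j, hj⟩
    obtain ⟨k, hik, hjk⟩ := hdir i j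
    refine ⟨k, ?_⟩
    rw [connectedComponentIn_eq (connectedComponentIn_mono x hik hi)]
    exact connectedComponentIn_mono y hjk hj
  · rintro x y - - ⟨i, hi⟩
    refine ⟨i, ?_⟩
    rw [← connectedComponentIn_eq hi]
    exact mem_connectedComponentIn (connectedComponentIn_nonempty_iff.1 ⟨y, hi⟩)

end Components

section Separators

variable {X : Type*} [TopologicalSpace X] {E K : Set X} {p q : X}

lemma sepPts_iff_notMem_connectedComponentIn :
    SepPts E p q ↔ p ∉ E ∧ q ∉ E ∧ q ∉ connectedComponentIn Eᶜ p := by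
  refine and_congr_right fun _ => and_congr_right fun hq => not_congr ⟨fun h => ?_, ?_⟩
  · exact h ▸ mem_connectedComponentIn hq
  · exact connectedComponentIn_eq

lemma SepPts.notMem_of_isPreconnected (h : SepPts E p q) {C : Set X} (hC : IsPreconnected C)
    (hCE : C ⊆ Eᶜ) (hp : p ∈ C) : q ∉ C := fun hq =>
  (sepPts_iff_notMem_connectedComponentIn.1 h).2.2 (hC.subset_connectedComponentIn hp hCE hq)

lemma sepPts_compl_union_of_disjoint {u v : Set X} (hu : IsOpen u) (hv : IsOpen v)
    (hd : Disjoint u v) (hp : p ∈ u) (hq : q ∈ v) : SepPts (u ∪ v)ᶜ p q := by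
  refine sepPts_iff_notMem_connectedComponentIn.2
    ⟨not_not_intro (Or.inl hp), not_not_intro (Or.inr hq), fun hq' => ?_⟩
  rw [compl_compl] at hq'
  obtain ⟨x, -, hx⟩ := isPreconnected_connectedComponentIn u v hu hv
    (connectedComponentIn_subset _ _) ⟨p, mem_connectedComponentIn (Or.inl hp), hp⟩ ⟨q, hq', hq⟩
  exact disjoint_left.1 hd hx.1 hx.2

lemma exists_isClosed_sepPts_of_dense {S : Set X} (hS : Dense S) (h : ¬ IsPreconnected S) :
    ∃ E ⊆ Sᶜ, IsClosed E ∧ ∃ p q, SepPts E p q := by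
  rw [IsPreconnected] at h
  push Not at h
  obtain ⟨u, v, hu, hv, hSuv, ⟨p, -, hpu⟩, ⟨q, -, hqv⟩, huv⟩ := h
  have hd : Disjoint u v := by
    rw [disjoint_iff_inter_eq_empty, ← not_nonempty_iff_eq_empty]
    intro hne
    obtain ⟨x, hx, hxS⟩ := hS.inter_open_nonempty _ (hu.inter hv) hne
    exact huv.subset ⟨hxS, hx⟩
  exact ⟨(u ∪ v)ᶜ, compl_subset_compl.2 hSuv, (hu.union hv).isClosed_compl, p, q,
    sepPts_compl_union_of_disjoint hu hv hd hpu hqv⟩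

variable [LocallyConnectedSpace X]

lemma sepPts_sInter_of_isChain {c : Set (Set X)} (hne : c.Nonempty) (hchain : IsChain (· ⊆ ·) c)
    (hclosed : ∀ L ∈ c, IsClosed L) (hsep : ∀ L ∈ c, SepPts L p q) : SepPts (⋂₀ c) p q := by
  obtain ⟨L₀, hL₀⟩ := hne
  refine sepPts_iff_notMem_connectedComponentIn.2 ⟨fun h => (hsep L₀ hL₀).1 (h L₀ hL₀),
    fun h => (hsep L₀ hL₀).2.1 (h L₀ hL₀), fun hq => ?_⟩
  have hdir : Directed (· ⊆ ·) fun L : c => (L : Set X)ᶜ := fun L M =>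
    (hchain.total L.2 M.2).elim (fun h => ⟨L, subset_rfl, compl_subset_compl.2 h⟩)
      fun h => ⟨M, compl_subset_compl.2 h, subset_rfl⟩
  rw [sInter_eq_iInter, compl_iInter, connectedComponentIn_iUnion_of_directed
    (fun L : c => (hclosed L L.2).isOpen_compl) hdir] at hq
  obtain ⟨L, hqL⟩ := mem_iUnion.1 hq
  exact (sepPts_iff_notMem_connectedComponentIn.1 (hsep L L.2)).2.2 hqL

lemma exists_minimal_isClosed_sepPts (hE : IsClosed E) (hsep : SepPts E p q) :
    ∃ K ⊆ E, Minimal (fun L => IsClosed L ∧ SepPts L p q) K :=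
  zorn_superset_nonempty {L | IsClosed L ∧ SepPts L p q}
    (fun c hc hchain hne => ⟨⋂₀ c,
      ⟨isClosed_sInter fun _ hL => (hc hL).1,
        sepPts_sInter_of_isChain hne hchain (fun _ hL => (hc hL).1) fun _ hL => (hc hL).2⟩,
      fun _ => sInter_subset_of_mem⟩)
    E ⟨hE, hsep⟩

variable [NormalSpace X]

theorem SepPts.left_or_right_of_union (hcirc : ∀ f : C(X, Circle), f.Nullhomotopic) {K₁ K₂ : Set X}
    (hK₁ : IsClosed K₁) (hK₂ : IsClosed K₂) (hd : Disjoint K₁ K₂) (h : SepPts (K₁ ∪ K₂) p q) :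
    SepPts K₁ p q ∨ SepPts K₂ p q := by
  obtain ⟨hp, hq, hqU⟩ := sepPts_iff_notMem_connectedComponentIn.1 h
  let U := connectedComponentIn (K₁ ∪ K₂)ᶜ p
  have hfrontier : frontier U ⊆ K₁ ∪ K₂ := by
    simpa only [compl_compl] using
      frontier_connectedComponentIn_subset_compl (hK₁.union hK₂).isOpen_compl p
  obtain ⟨φ₁, φ₂, hφ₁, hφ₂, hU, hUc⟩ :=
    exists_continuousOn_eqOn_add_two_pi hK₁ hK₂ hd hfrontier
  have hexp : ∀ x, Circle.exp (φ₁ x) = Circle.exp (φ₂ x) := fun x => by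
    by_cases hx : x ∈ U
    · rw [hU hx]
    · rw [hUc hx, Circle.exp_add_two_pi]
  by_contra! hnot
  have hmem {L : Set X} (hL : L ⊆ K₁ ∪ K₂) (hns : ¬ SepPts L p q) :
      q ∈ connectedComponentIn Lᶜ p := by
    by_contra hqL
    exact hns (sepPts_iff_notMem_connectedComponentIn.2
      ⟨notMem_subset hL hp, notMem_subset hL hq, hqL⟩)
  have hdiff : φ₁ p - φ₂ p = φ₁ q - φ₂ q :=
    sub_eq_sub_of_circleExp_eq hcirc hK₁.isOpen_compl hK₂.isOpen_compl
      (by rw [← compl_inter, hd.inter_eq, compl_empty]) hφ₁ hφ₂ hexp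
      (hmem subset_union_left hnot.1) (hmem subset_union_right hnot.2)
  rw [hU (mem_connectedComponentIn hp), hUc hqU] at hdiff
  linarith [Real.pi_pos]

lemma isPreconnected_of_minimal_sepPts (hcirc : ∀ f : C(X, Circle), f.Nullhomotopic)
    (hK : Minimal (fun L => IsClosed L ∧ SepPts L p q) K) : IsPreconnected K := by
  obtain ⟨⟨hKc, hsep⟩, hmin⟩ := hK
  rw [isPreconnected_iff_subset_of_fully_disjoint_closed hKc]
  intro a b ha hb hab hd
  have hsep' : SepPts (K ∩ a ∪ K ∩ b) p q := by
    rwa [← inter_union_distrib_left, inter_eq_left.2 hab]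
  refine (hsep'.left_or_right_of_union hcirc (hKc.inter ha) (hKc.inter hb)
    (hd.mono inter_subset_right inter_subset_right)).imp (fun h => ?_) fun h => ?_
  · exact (hmin ⟨hKc.inter ha, h⟩ inter_subset_left).trans inter_subset_right
  · exact (hmin ⟨hKc.inter hb, h⟩ inter_subset_left).trans inter_subset_right

theorem exists_isPreconnected_sepPts (hcirc : ∀ f : C(X, Circle), f.Nullhomotopic)
    (hE : IsClosed E) (hsep : SepPts E p q) : ∃ K ⊆ E, IsPreconnected K ∧ SepPts K p q := by
  obtain ⟨K, hKE, hK⟩ := exists_minimal_isClosed_sepPts hE hsep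
  exact ⟨K, hKE, isPreconnected_of_minimal_sepPts hcirc hK, hK.prop.2⟩

end Separators

section TotallyDisconnectedComplement

lemma dense_of_isTotallyDisconnected_compl {X : Type*} [TopologicalSpace X] [T1Space X]
    [ConnectedSpace X] [LocallyConnectedSpace X] [Nontrivial X] {S : Set X}
    (hS : IsTotallyDisconnected Sᶜ) : Dense S := by
  rw [← compl_compl S, ← interior_eq_empty_iff_dense_compl, eq_empty_iff_forall_notMem]
  intro x hx
  have hxC := mem_connectedComponentIn hx
  have hC : (connectedComponentIn (interior Sᶜ) x).Subsingleton :=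
    hS _ ((connectedComponentIn_subset _ _).trans interior_subset)
      isPreconnected_connectedComponentIn
  have hopen : IsOpen {x} := by
    rw [← hC.eq_singleton_of_mem hxC]
    exact isOpen_interior.connectedComponentIn
  exact not_isOpen_singleton x hopen

theorem isPreconnected_of_isTotallyDisconnected_compl {X : Type*} [TopologicalSpace X]
    [T4Space X] [ConnectedSpace X] [LocallyConnectedSpace X]
    (hcirc : ∀ f : C(X, Circle), f.Nullhomotopic) {S : Set X}
    (hcut : ∀ x ∉ S, IsPreconnected ({x}ᶜ : Set X)) (hS : IsTotallyDisconnected Sᶜ) :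
    IsPreconnected S := by
  rcases subsingleton_or_nontrivial X with _ | _
  · exact subsingleton_of_subsingleton.isPreconnected
  by_contra hnot
  obtain ⟨E, hES, hE, p, q, hsep⟩ :=
    exists_isClosed_sepPts_of_dense (dense_of_isTotallyDisconnected_compl hS) hnot
  obtain ⟨K, hKE, hK, hKsep⟩ := exists_isPreconnected_sepPts hcirc hE hsep
  have hKc : IsPreconnected Kᶜ := by
    rcases (hS K (hKE.trans hES) hK).eq_empty_or_singleton with rfl | ⟨x, rfl⟩
    · exact compl_empty ▸ isPreconnected_univ
    · exact hcut x (hES (hKE rfl))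
  exact hKsep.notMem_of_isPreconnected hKc subset_rfl hKsep.1 hKsep.2.1

end TotallyDisconnectedComplement

lemma FineFam.isTotallyDisconnected_compl_sUnion {X : Type*} [PseudoMetricSpace X]
    {𝓐 : Set (Set X)} (hfine : FineFam 𝓐) : IsTotallyDisconnected (⋃₀ 𝓐)ᶜ := by
  intro C hCS hC x hx y hy
  by_contra hxy
  obtain ⟨𝓑, h𝓑, -, hsep⟩ := hfine x y hxy
  exact hsep.notMem_of_isPreconnected hC
    (hCS.trans (compl_subset_compl.2 (sUnion_mono h𝓑))) hx hy

theorem union_is_connected_general {X : Type*} [MetricSpace X] [ConnectedSpace X]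
    [LocallyConnectedSpace X] (hcirc : ∀ f : C(X, Circle), f.Nullhomotopic) {𝓐 : Set (Set X)}
    (hcut : ∀ x ∉ ⋃₀ 𝓐, IsPreconnected ({x}ᶜ : Set X)) (hfine : FineFam 𝓐)
    (hne : (⋃₀ 𝓐).Nonempty) : IsConnected (⋃₀ 𝓐) :=
  ⟨hne, isPreconnected_of_isTotallyDisconnected_compl hcirc hcut
    hfine.isTotallyDisconnected_compl_sUnion⟩

/-- The union of a null and fine collection of connected closed subsets (each with at
least two points) of a Peano continuum without cut points admitting no essential map to
the circle is connected. -/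
theorem union_is_connected {X : Type*} [MetricSpace X] [CompactSpace X]
    [ConnectedSpace X] [LocallyConnectedSpace X]
    (hcut : ∀ x : X, IsPreconnected ({x}ᶜ : Set X))
    (hcirc : ∀ f : C(X, Circle), f.Nullhomotopic)
    (𝓐 : Set (Set X))
    (hclosed : ∀ A ∈ 𝓐, IsClosed A) (hconn : ∀ A ∈ 𝓐, IsConnected A)
    (hbig : ∀ A ∈ 𝓐, A.Nontrivial)
    (hnull : NullFam 𝓐) (hfine : FineFam 𝓐) (hne : 𝓐.Nonempty) :
    IsConnected (⋃₀ 𝓐) := by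
  obtain ⟨A, hA⟩ := hne
  exact union_is_connected_general hcirc (fun x _ => hcut x) hfine
    ((hconn A hA).nonempty.mono (subset_sUnion_of_mem hA))
end

section
/- Let X be a Peano continuum without cut points which admits no essential map to the circle, and let 𝓐 be a collection of connected closed subsets of X, each containing at least two points, such that 𝓐 is null and fine. For E ∈ 𝓐 let ℷ(E) denote the union of all C ∈ 𝓐 for which there is a crossing sequence in 𝓐 from E to C, and for e ∈ E ∈ 𝓐 set ℷ(e) = ℷ(E) (this is well defined: any two elements of 𝓐 containing e intersect, hence cross, so they have the same cross-component). Then for each e ∈ ∪𝓐 there exists a neighborhood basis at e in X consisting of connected open sets U with boundary ∂U ⊆ ℷ(e). -/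
open Set Filter Topology Pointwise

/-!
A connected set disjoint from `B` lies in one component of `Bᶜ`, so two members of `𝓐` cross exactly
when they meet. Hence the cross-component `K` of `E` has connected union `ℷ = ⋃₀ K`, and the members
of `𝓐` outside `K` are disjoint from `ℷ`.

Since `X` admits no essential map to the circle, it has the Janiszewski property: if the union of
two disjoint closed sets separates two points, then one of the two sets does. Let a finite
subfamily of `𝓐` separate two points of the closure of `ℷ`. Its members outside `K` miss the
connected set `ℷ`, hence do not separate the two points, so its members inside `K` do.

Now let `e ∈ E`, and let `V` be a component of the complement of the closure of `ℷ`. As `e` is not a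
cut point, the frontier of `V` contains some `q ≠ e`. Finitely many members of `K` separate `e` from
`q`, and they miss the connected set `V ∪ {q}`, so they separate `e` from all of `V`. Thus finitely
many members of `K` separate `e` from any other point. By compactness, finitely many members of `K`
separate `e` from the whole frontier of a given small neighborhood of `e`; the component of `e` in
the complement of their union lies in that neighborhood, and its frontier lies in `ℷ`.
-/

section Components

variable {X : Type*} [TopologicalSpace X] {S : Set X} {x y z : X}

theorem isClosed_sUnion_of_finite {𝓑 : Set (Set X)} (hfin : 𝓑.Finite)
    (h : ∀ C ∈ 𝓑, IsClosed C) : IsClosed (⋃₀ 𝓑) :=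
  sUnion_eq_biUnion ▸ hfin.isClosed_biUnion h

theorem connectedComponentIn_eq_of_isPreconnected {F T : Set X} (hT : IsPreconnected T)
    (hTF : T ⊆ F) (hx : x ∈ T) (hy : y ∈ T) :
    connectedComponentIn F x = connectedComponentIn F y :=
  connectedComponentIn_eq (hT.subset_connectedComponentIn hx hTF hy)

theorem disjoint_connectedComponentIn_of_ne {F : Set X}
    (h : connectedComponentIn F x ≠ connectedComponentIn F y) :
    Disjoint (connectedComponentIn F x) (connectedComponentIn F y) :=
  disjoint_left.mpr fun _ hx hy =>
    h ((connectedComponentIn_eq hx).trans (connectedComponentIn_eq hy).symm)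

theorem frontier_connectedComponentIn_subset [LocallyConnectedSpace X] (hS : IsClosed S) (x : X) :
    frontier (connectedComponentIn Sᶜ x) ⊆ S := by
  intro z hz
  by_contra hzS
  have hopen (w : X) : IsOpen (connectedComponentIn Sᶜ w) := hS.isOpen_compl.connectedComponentIn
  have hzz : z ∈ connectedComponentIn Sᶜ z := mem_connectedComponentIn hzS
  rw [(hopen x).frontier_eq] at hz
  obtain ⟨w, hwz, hwx⟩ := mem_closure_iff.mp hz.1 _ (hopen z) hzz
  exact hz.2 (connectedComponentIn_eq hwx ▸ connectedComponentIn_eq hwz ▸ hzz)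

theorem inter_frontier_nonempty_of_isPreconnected {T U : Set X} (hT : IsPreconnected T)
    (hU : IsOpen U) (hTU : (T ∩ U).Nonempty) (hnot : ¬ T ⊆ U) : (T ∩ frontier U).Nonempty := by
  contrapose! hnot
  refine hT.subset_of_closure_inter_subset hU hTU fun z hz => ?_
  by_contra hzU
  exact hnot.subset ⟨hz.2, hU.frontier_eq ▸ ⟨hz.1, hzU⟩⟩

theorem SepPts.of_isPreconnected {T : Set X} (h : SepPts S x y) (hT : IsPreconnected T)
    (hTS : T ⊆ Sᶜ) (hy : y ∈ T) (hz : z ∈ T) : SepPts S x z :=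
  ⟨h.1, hTS hz, connectedComponentIn_eq_of_isPreconnected hT hTS hy hz ▸ h.2.2⟩

end Components

/-- The Janiszewski property, in the form of a separation statement: if the union of two disjoint
closed sets separates two points, then so does one of the two sets. -/
def IsJaniszewski (X : Type*) [TopologicalSpace X] : Prop :=
  ∀ A B : Set X, IsClosed A → IsClosed B → Disjoint A B →
    ∀ x y : X, SepPts (A ∪ B) x y → SepPts A x y ∨ SepPts B x y

section Janiszewski

variable {X : Type*} [TopologicalSpace X]

theorem exists_lift_of_nullhomotopic_s17 {Y Z : Type*} [TopologicalSpace Y] [TopologicalSpace Z]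
    {p : Z → Y} (hp : IsCoveringMap p) (hsurj : Function.Surjective p) {f : C(X, Y)}
    (hf : f.Nullhomotopic) : ∃ θ : C(X, Z), ∀ x, p (θ x) = f x := by
  obtain ⟨y, hy⟩ := hf
  obtain ⟨H⟩ := hy.symm
  obtain ⟨z, rfl⟩ := hsurj y
  have H_zero (x : X) : H.toContinuousMap (0, x) = p (ContinuousMap.const X z x) :=
    H.map_zero_left x
  let L := hp.liftHomotopy H.toContinuousMap _ H_zero
  refine ⟨L.comp ((ContinuousMap.const X 1).prodMk (ContinuousMap.id X)), fun x => ?_⟩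
  exact (congr_fun (hp.liftHomotopy_lifts H.toContinuousMap _ H_zero) (1, x)).trans
    (H.map_one_left x)

theorem exists_lift_of_circle_exp_eq (hcirc : ∀ f : C(X, Circle), f.Nullhomotopic)
    {U V : Set X} (hU : IsOpen U) (hV : IsOpen V) (hUV : U ∪ V = univ) {σ τ : X → ℝ}
    (hσ : ContinuousOn σ U) (hτ : ContinuousOn τ V)
    (hστ : ∀ z, Circle.exp (σ z) = Circle.exp (τ z)) :
    ∃ θ : C(X, ℝ), ∀ z, Circle.exp (θ z) = Circle.exp (σ z) := by
  have hfU : ContinuousOn (fun z => Circle.exp (σ z)) U :=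
    Circle.exp.continuous.comp_continuousOn hσ
  have hfV : ContinuousOn (fun z => Circle.exp (σ z)) V :=
    (Circle.exp.continuous.comp_continuousOn hτ).congr fun z _ => hστ z
  have hf : Continuous fun z => Circle.exp (σ z) :=
    continuousOn_univ.mp (hUV ▸ hfU.union_of_isOpen hfV hU hV)
  exact exists_lift_of_nullhomotopic_s17 Circle.isCoveringMap_exp Circle.exp_surjective
    (hcirc ⟨_, hf⟩)

theorem sub_eq_sub_of_circle_exp_eq {T : Set X} (hT : IsPreconnected T) {φ ψ : X → ℝ}
    (hφ : ContinuousOn φ T) (hψ : ContinuousOn ψ T)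
    (h : ∀ z ∈ T, Circle.exp (φ z) = Circle.exp (ψ z)) {x y : X} (hx : x ∈ T) (hy : y ∈ T) :
    φ x - ψ x = φ y - ψ y := by
  have hdiscrete : IsDiscrete (AddSubgroup.zmultiples (2 * Real.pi) : Set ℝ) :=
    isDiscrete_iff_discreteTopology.mpr
      (inferInstanceAs (DiscreteTopology (AddSubgroup.zmultiples (2 * Real.pi))))
  refine hT.constant_of_mapsTo hdiscrete (f := fun z => φ z - ψ z) (hφ.sub hψ) ?_ hx hy
  intro z hz
  obtain ⟨n, hn⟩ := Circle.exp_eq_exp.mp (h z hz)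
  exact ⟨n, by simp [hn]⟩

/-- Mayer–Vietoris for the cover of `X` by `Bᶜ` and `Aᶜ`: the indicator of `Q` is continuous on the
overlap of the two open sets and is written there as a difference of functions continuous on
each. -/
theorem exists_continuousOn_add_indicator [NormalSpace X] {A B Q : Set X} (hA : IsClosed A)
    (hB : IsClosed B) (hAB : Disjoint A B) (hQ : frontier Q ⊆ A ∪ B) (c : ℝ) :
    ∃ σ : X → ℝ, ContinuousOn σ Bᶜ ∧ ContinuousOn (σ + Q.indicator fun _ => c) Aᶜ := by
  classical
  obtain ⟨g, hgA, hgB, -⟩ := exists_continuous_zero_one_of_isClosed hA hB hAB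
  refine ⟨Q.indicator fun z => -(c * g z), ?_, ?_⟩
  · rw [← piecewise_eq_indicator]
    refine ContinuousOn.piecewise ?_ (by fun_prop) (by fun_prop)
    rintro z ⟨hzB, hzQ⟩
    simp [hgA ((hQ hzQ).resolve_right hzB)]
  · rw [← indicator_add', ← piecewise_eq_indicator]
    refine ContinuousOn.piecewise ?_ (by fun_prop) (by fun_prop)
    rintro z ⟨hzA, hzQ⟩
    simp [hgB ((hQ hzQ).resolve_left hzA)]

/-- With `Q` the component of `y` off `A ∪ B`, take `σ` on `Bᶜ` and `τ` on `Aᶜ` that agree off `Q`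
and differ by `2π` on `Q`, and let `θ` lift the circle-valued map `exp σ = exp τ`. If neither `B`
nor `A` separated `x` from `y`, the increment of `θ` between `x` and `y` would be that of `σ` and
also that of `τ`. -/
theorem isJaniszewski_of_nullhomotopic [NormalSpace X] [LocallyConnectedSpace X]
    (hcirc : ∀ f : C(X, Circle), f.Nullhomotopic) : IsJaniszewski X := by
  intro A B hA hB hAB x y hsep
  obtain ⟨hx, hy, hne⟩ := hsep
  have ⟨hxA, hxB⟩ := not_or.mp hx
  have ⟨hyA, hyB⟩ := not_or.mp hy
  by_contra! ⟨hnotA, hnotB⟩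
  have hcompA : connectedComponentIn Aᶜ x = connectedComponentIn Aᶜ y := by
    by_contra h
    exact hnotA ⟨hxA, hyA, h⟩
  have hcompB : connectedComponentIn Bᶜ x = connectedComponentIn Bᶜ y := by
    by_contra h
    exact hnotB ⟨hxB, hyB, h⟩
  let Q := connectedComponentIn (A ∪ B)ᶜ y
  have hyQ : y ∈ Q := mem_connectedComponentIn hy
  have hxQ : x ∉ Q := fun h => hne (connectedComponentIn_eq h).symm
  obtain ⟨σ, hσ, hτ⟩ := exists_continuousOn_add_indicator hA hB hAB
    (frontier_connectedComponentIn_subset (hA.union hB) y : frontier Q ⊆ A ∪ B) (2 * Real.pi)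
  set τ : X → ℝ := σ + Q.indicator fun _ => 2 * Real.pi with τ_def
  have hστ (z : X) : Circle.exp (σ z) = Circle.exp (τ z) := by
    by_cases hz : z ∈ Q <;> simp [τ_def, hz, Circle.exp_add]
  obtain ⟨θ, hθ⟩ := exists_lift_of_circle_exp_eq hcirc hB.isOpen_compl hA.isOpen_compl
    (by rw [← compl_inter, hAB.symm.inter_eq, compl_empty]) hσ hτ hστ
  have hincrσ : θ x - σ x = θ y - σ y :=
    sub_eq_sub_of_circle_exp_eq isPreconnected_connectedComponentIn θ.continuous.continuousOn
      (hσ.mono (connectedComponentIn_subset _ _)) (fun z _ => hθ z)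
      (mem_connectedComponentIn hxB) (hcompB ▸ mem_connectedComponentIn hyB)
  have hincrτ : θ x - τ x = θ y - τ y :=
    sub_eq_sub_of_circle_exp_eq isPreconnected_connectedComponentIn θ.continuous.continuousOn
      (hτ.mono (connectedComponentIn_subset _ _)) (fun z _ => (hθ z).trans (hστ z))
      (mem_connectedComponentIn hxA) (hcompA ▸ mem_connectedComponentIn hyA)
  have hτx : τ x = σ x := by simp [τ_def, hxQ]
  have hτy : τ y = σ y + 2 * Real.pi := by simp [τ_def, hyQ]
  linarith [Real.pi_pos]

end Janiszewski

/-- The points `x` and `y` are separated by the union of a finite subfamily of `K`. A family is fine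
when it finitely separates any two distinct points. -/
def FinitelySeparates {X : Type*} [TopologicalSpace X] (K : Set (Set X)) (x y : X) : Prop :=
  ∃ 𝓑 ⊆ K, 𝓑.Finite ∧ SepPts (⋃₀ 𝓑) x y

section FinitelySeparates

variable {X : Type*} [TopologicalSpace X] {K : Set (Set X)} {e x y : X}

theorem finitelySeparates_of_disjoint (hX : IsJaniszewski X) {𝓐 : Set (Set X)}
    (hclosed : ∀ A ∈ 𝓐, IsClosed A) (hK : IsPreconnected (⋃₀ K))
    (hdisj : ∀ A ∈ 𝓐 \ K, Disjoint (⋃₀ K) A) (hx : x ∈ closure (⋃₀ K))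
    (hy : y ∈ closure (⋃₀ K)) (h : FinitelySeparates 𝓐 x y) : FinitelySeparates K x y := by
  obtain ⟨𝓒, h𝓒, hfin, hsep⟩ := h
  have hfinK : (𝓒 ∩ K).Finite := hfin.inter_of_left K
  have hclosedK : IsClosed (⋃₀ (𝓒 ∩ K)) :=
    isClosed_sUnion_of_finite hfinK fun C hC => hclosed C (h𝓒 hC.1)
  have hclosedK' : IsClosed (⋃₀ (𝓒 \ K)) :=
    isClosed_sUnion_of_finite hfin.sdiff fun C hC => hclosed C (h𝓒 hC.1)
  have hmiss : Disjoint (⋃₀ K) (⋃₀ (𝓒 \ K)) :=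
    disjoint_sUnion_right.mpr fun C hC => hdisj C ⟨h𝓒 hC.1, hC.2⟩
  rw [← inter_union_sdiff 𝓒 K, sUnion_union] at hsep
  refine ⟨𝓒 ∩ K, inter_subset_right, hfinK, (hX _ _ hclosedK hclosedK'
    (hmiss.mono_left (sUnion_mono inter_subset_right)) x y hsep).resolve_right fun hbad => ?_⟩
  have hT : IsPreconnected (closure (⋃₀ K) \ ⋃₀ (𝓒 \ K)) :=
    hK.subset_closure (subset_sdiff.mpr ⟨subset_closure, hmiss⟩) sdiff_subset
  exact hbad.2.2 (connectedComponentIn_eq_of_isPreconnected hT (fun _ hz => hz.2)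
    ⟨hx, hbad.1⟩ ⟨hy, hbad.2.1⟩)

variable [LocallyConnectedSpace X]

theorem t2Space_of_pairwise_finitelySeparates (hclosed : ∀ C ∈ K, IsClosed C)
    (h : Pairwise (FinitelySeparates K)) : T2Space X where
  t2 x y hxy := by
    obtain ⟨𝓑, h𝓑, hfin, hx, hy, hne⟩ := h hxy
    have hopen (z : X) : IsOpen (connectedComponentIn (⋃₀ 𝓑)ᶜ z) :=
      (isClosed_sUnion_of_finite hfin fun C hC =>
        hclosed C (h𝓑 hC)).isOpen_compl.connectedComponentIn
    exact ⟨_, _, hopen x, hopen y, mem_connectedComponentIn hx, mem_connectedComponentIn hy,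
      disjoint_connectedComponentIn_of_ne hne⟩

theorem finitelySeparates_of_forall_mem_closure (hcut : IsPreconnected ({e}ᶜ : Set X))
    (hnt : (⋃₀ K).Nontrivial)
    (h : ∀ q ∈ closure (⋃₀ K), e ≠ q → FinitelySeparates K e q) (hey : e ≠ y) :
    FinitelySeparates K e y := by
  by_cases hy : y ∈ closure (⋃₀ K)
  · exact h y hy hey
  let V := connectedComponentIn (closure (⋃₀ K))ᶜ y
  have hVopen : IsOpen V := isClosed_closure.isOpen_compl.connectedComponentIn
  have hVpre : IsPreconnected V := isPreconnected_connectedComponentIn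
  have hyV : y ∈ V := mem_connectedComponentIn hy
  have hVK : V ⊆ (⋃₀ K)ᶜ :=
    (connectedComponentIn_subset _ _).trans (compl_subset_compl.mpr subset_closure)
  obtain ⟨r, hrK, hre⟩ := hnt.exists_ne e
  obtain ⟨q, hqe, hqV⟩ : ({e}ᶜ ∩ frontier V).Nonempty :=
    inter_frontier_nonempty_of_isPreconnected hcut hVopen ⟨y, hey.symm, hyV⟩
      fun hsub => hVK (hsub hre) hrK
  obtain ⟨𝓑, h𝓑, hfin, hsep⟩ :=
    h q (frontier_connectedComponentIn_subset isClosed_closure y hqV) (Ne.symm hqe)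
  have hT : IsPreconnected (insert q V) :=
    hVpre.subset_closure (subset_insert q V) (insert_subset hqV.1 subset_closure)
  have hTK : insert q V ⊆ (⋃₀ 𝓑)ᶜ :=
    insert_subset hsep.2.1 (hVK.trans (compl_subset_compl.mpr (sUnion_mono h𝓑)))
  exact ⟨𝓑, h𝓑, hfin,
    hsep.of_isPreconnected hT hTK (mem_insert q V) (mem_insert_of_mem q hyV)⟩

theorem exists_finite_disjoint_connectedComponentIn (hclosed : ∀ C ∈ K, IsClosed C) {F : Set X}
    (hF : IsCompact F) (h : ∀ q ∈ F, FinitelySeparates K e q) :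
    ∃ 𝓑 ⊆ K, 𝓑.Finite ∧ e ∉ ⋃₀ 𝓑 ∧ Disjoint (connectedComponentIn (⋃₀ 𝓑)ᶜ e) F := by
  refine hF.induction_on (p := fun F => ∃ 𝓑 ⊆ K, 𝓑.Finite ∧ e ∉ ⋃₀ 𝓑 ∧
    Disjoint (connectedComponentIn (⋃₀ 𝓑)ᶜ e) F) ?_ ?_ ?_ ?_
  · exact ⟨∅, empty_subset _, finite_empty, by simp, disjoint_empty _⟩
  · rintro s t hst ⟨𝓑, h𝓑, hfin, he, hdisj⟩
    exact ⟨𝓑, h𝓑, hfin, he, hdisj.mono_right hst⟩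
  · rintro s t ⟨𝓑, h𝓑, hfin, he, hdisj⟩ ⟨𝓑', h𝓑', hfin', he', hdisj'⟩
    refine ⟨𝓑 ∪ 𝓑', union_subset h𝓑 h𝓑', hfin.union hfin',
      sUnion_union 𝓑 𝓑' ▸ not_or.mpr ⟨he, he'⟩, disjoint_union_right.mpr ⟨?_, ?_⟩⟩
    · exact hdisj.mono_left (connectedComponentIn_mono e
        (compl_subset_compl.mpr (sUnion_mono subset_union_left)))
    · exact hdisj'.mono_left (connectedComponentIn_mono e
        (compl_subset_compl.mpr (sUnion_mono subset_union_right)))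
  · intro q hq
    obtain ⟨𝓑, h𝓑, hfin, he, hq𝓑, hne⟩ := h q hq
    have hopen : IsOpen (connectedComponentIn (⋃₀ 𝓑)ᶜ q) :=
      (isClosed_sUnion_of_finite hfin fun C hC =>
        hclosed C (h𝓑 hC)).isOpen_compl.connectedComponentIn
    exact ⟨_, mem_nhdsWithin_of_mem_nhds (hopen.mem_nhds (mem_connectedComponentIn hq𝓑)),
      𝓑, h𝓑, hfin, he, disjoint_connectedComponentIn_of_ne hne⟩

theorem exists_isOpen_isConnected_frontier_subset [R1Space X] [WeaklyLocallyCompactSpace X]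
    (hclosed : ∀ C ∈ K, IsClosed C) (h : ∀ q, e ≠ q → FinitelySeparates K e q) {W : Set X}
    (hW : W ∈ 𝓝 e) :
    ∃ U : Set X, IsOpen U ∧ IsConnected U ∧ e ∈ U ∧ U ⊆ W ∧ frontier U ⊆ ⋃₀ K := by
  obtain ⟨N, ⟨hN, hNcompact, hNclosed⟩, hNW⟩ := (isCompact_isClosed_basis_nhds e).mem_iff.mp hW
  have heN : e ∈ interior N := mem_interior_iff_mem_nhds.mpr hN
  have hFcompact : IsCompact (frontier (interior N)) :=
    hNcompact.of_isClosed_subset isClosed_frontier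
      (frontier_subset_closure.trans (closure_minimal interior_subset hNclosed))
  obtain ⟨𝓑, h𝓑, hfin, he, hdisj⟩ :=
    exists_finite_disjoint_connectedComponentIn hclosed hFcompact fun q hq => h q <| by
      rintro rfl
      exact disjoint_left.mp (disjoint_frontier_iff_isOpen.mpr isOpen_interior) hq heN
  have h𝓑closed : IsClosed (⋃₀ 𝓑) := isClosed_sUnion_of_finite hfin fun C hC => hclosed C (h𝓑 hC)
  have heU : e ∈ connectedComponentIn (⋃₀ 𝓑)ᶜ e := mem_connectedComponentIn he
  have hUN : connectedComponentIn (⋃₀ 𝓑)ᶜ e ⊆ interior N := by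
    by_contra hnot
    exact (inter_frontier_nonempty_of_isPreconnected isPreconnected_connectedComponentIn
      isOpen_interior ⟨e, heU, heN⟩ hnot).ne_empty hdisj.inter_eq
  exact ⟨_, h𝓑closed.isOpen_compl.connectedComponentIn,
    isConnected_connectedComponentIn_iff.mpr he, heU, (hUN.trans interior_subset).trans hNW,
    (frontier_connectedComponentIn_subset h𝓑closed e).trans (sUnion_mono h𝓑)⟩

end FinitelySeparates

/-- The cross-component of `E` in `𝓐`; the union of its members is `ℷ(E)`. -/
def crossComponent {X : Type*} [TopologicalSpace X] (𝓐 : Set (Set X)) (E : Set X) :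
    Set (Set X) :=
  {C : Set X | C ∈ 𝓐 ∧ CrossSeqFromTo 𝓐 E C}

section CrossComponent

variable {X : Type*} [TopologicalSpace X] {𝓐 : Set (Set X)} {E C D : Set X}

theorem Crosses.inter_nonempty (hD : IsPreconnected D) (h : Crosses C D) : (C ∩ D).Nonempty := by
  rcases h with h | ⟨⟨hDC, x, hx, y, hy, hne⟩, -⟩
  · exact h
  · exact absurd (connectedComponentIn_eq_of_isPreconnected hD hDC hx hy) hne

theorem self_mem_crossComponent (hE : E ∈ 𝓐) : E ∈ crossComponent 𝓐 E :=
  ⟨hE, 0, fun _ => E, rfl, rfl, fun _ _ => hE, fun i hi => absurd hi i.not_lt_zero⟩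

theorem mem_crossComponent_of_crosses (hC : C ∈ crossComponent 𝓐 E) (hD : D ∈ 𝓐)
    (hCD : Crosses C D) : D ∈ crossComponent 𝓐 E := by
  obtain ⟨-, n, c, rfl, rfl, hmem, hcross⟩ := hC
  refine ⟨hD, n + 1, fun i => if i ≤ n then c i else D, by simp, by simp, fun i _ => ?_,
    fun i hi => ?_⟩
  · by_cases hin : i ≤ n
    · simpa [hin] using hmem i hin
    · simpa [hin] using hD
  · rcases Nat.lt_succ_iff_lt_or_eq.mp hi with hin | rfl
    · simpa [hin.le, Nat.succ_le_of_lt hin] using hcross i hin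
    · simpa using hCD

theorem disjoint_sUnion_crossComponent (hD : D ∈ 𝓐 \ crossComponent 𝓐 E) :
    Disjoint (⋃₀ crossComponent 𝓐 E) D :=
  disjoint_sUnion_left.mpr fun _ hC => not_not.mp fun hCD =>
    hD.2 (mem_crossComponent_of_crosses hC hD.1 (Or.inl (not_disjoint_iff_nonempty_inter.mp hCD)))

theorem isPreconnected_sUnion_crossComponent (hconn : ∀ A ∈ 𝓐, IsConnected A) (hE : E ∈ 𝓐) :
    IsPreconnected (⋃₀ crossComponent 𝓐 E) := by
  obtain ⟨x, hx⟩ := (hconn E hE).nonempty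
  refine isPreconnected_of_forall x ?_
  rintro y ⟨C, ⟨-, n, c, rfl, rfl, hmem, hcross⟩, hy⟩
  have hchain : IsPreconnected (⋃ i ∈ Iic n, c i) :=
    IsPreconnected.biUnion_of_chain ordConnected_Iic
      (fun i hi => (hconn _ (hmem i hi)).isPreconnected) fun i _ hi =>
        (hcross i hi).inter_nonempty (hconn _ (hmem _ hi)).isPreconnected
  have hprefix (i : ℕ) (hi : i ≤ n) : c i ∈ crossComponent 𝓐 (c 0) :=
    ⟨hmem i hi, i, c, rfl, rfl, fun j hj => hmem j (hj.trans hi),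
      fun j hj => hcross j (hj.trans_le hi)⟩
  exact ⟨_, iUnion₂_subset fun i hi => subset_sUnion_of_mem (hprefix i hi),
    mem_biUnion (mem_Iic.mpr n.zero_le) hx, mem_biUnion self_mem_Iic hy, hchain⟩

end CrossComponent

theorem gimel_neighborhood_basis_general {X : Type*} [TopologicalSpace X]
    [WeaklyLocallyCompactSpace X] [LocallyConnectedSpace X] (hX : IsJaniszewski X)
    {𝓐 : Set (Set X)} (hclosed : ∀ A ∈ 𝓐, IsClosed A) (hconn : ∀ A ∈ 𝓐, IsConnected A)
    (hfine : Pairwise (FinitelySeparates 𝓐)) {E : Set X} (hE : E ∈ 𝓐) (hnt : E.Nontrivial)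
    {e : X} (he : e ∈ E) (hcut : IsPreconnected ({e}ᶜ : Set X)) :
    ∀ W ∈ 𝓝 e, ∃ U : Set X, IsOpen U ∧ IsConnected U ∧ e ∈ U ∧ U ⊆ W ∧
      frontier U ⊆ ⋃₀ {C : Set X | C ∈ 𝓐 ∧ CrossSeqFromTo 𝓐 E C} := by
  have : T2Space X := t2Space_of_pairwise_finitelySeparates hclosed hfine
  let K := crossComponent 𝓐 E
  have hEK : E ⊆ ⋃₀ K := subset_sUnion_of_mem (self_mem_crossComponent hE)
  have hsep_closure (q : X) (hq : q ∈ closure (⋃₀ K)) (heq : e ≠ q) : FinitelySeparates K e q :=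
    finitelySeparates_of_disjoint hX hclosed (isPreconnected_sUnion_crossComponent hconn hE)
      (fun _ => disjoint_sUnion_crossComponent) (subset_closure (hEK he)) hq (hfine heq)
  have hsep (q : X) (heq : e ≠ q) : FinitelySeparates K e q :=
    finitelySeparates_of_forall_mem_closure hcut (hnt.mono hEK) hsep_closure heq
  exact fun W => exists_isOpen_isConnected_frontier_subset (fun C hC => hclosed C hC.1) hsep

/-- Claim: each point `e` of `⋃𝓐` has a neighborhood basis of connected open sets
whose boundaries lie in the cross-component `ℷ(e)` of `e`. -/
theorem gimel_neighborhood_basis {X : Type*} [MetricSpace X] [CompactSpace X]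
    [ConnectedSpace X] [LocallyConnectedSpace X]
    (hcut : ∀ x : X, IsPreconnected ({x}ᶜ : Set X))
    (hcirc : ∀ f : C(X, Circle), f.Nullhomotopic)
    (𝓐 : Set (Set X))
    (hclosed : ∀ A ∈ 𝓐, IsClosed A) (hconn : ∀ A ∈ 𝓐, IsConnected A)
    (hbig : ∀ A ∈ 𝓐, A.Nontrivial)
    (hnull : NullFam 𝓐) (hfine : FineFam 𝓐)
    (E : Set X) (hE : E ∈ 𝓐) (e : X) (he : e ∈ E) :
    ∀ W ∈ 𝓝 e, ∃ U : Set X, IsOpen U ∧ IsConnected U ∧ e ∈ U ∧ U ⊆ W ∧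
      frontier U ⊆ ⋃₀ {C : Set X | C ∈ 𝓐 ∧ CrossSeqFromTo 𝓐 E C} :=
  gimel_neighborhood_basis_general (isJaniszewski_of_nullhomotopic hcirc) hclosed hconn
    (fun x y => hfine x y) hE (hbig E hE) he (hcut e)
end
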